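/- Let H be a real Hilbert space, 𝒳 ⊆ H, and let 𝒴 ⊆ H be open and convex. Let q(y|x) := exp(−a(x) − b(y) + c·⟨x, y⟩) for (x, y) ∈ 𝒳 × 𝒴, where c ≥ 0, a : 𝒳 → ℝ, and b : 𝒴 → ℝ is continuously differentiable with locally bounded derivative. Let P be a probability measure on 𝒳 such that for every y ∈ 𝒴 there exists r > 0 with ∫ (1 + ‖x‖)²·exp(−a(x) + c·r·‖x‖ + c·⟨x, y⟩) dP(x) < ∞. Then ∫ (1 + ‖x‖)·q(y|x) dP(x) < ∞ and ∫ q(y|x) dP(x) > 0 for all y ∈ 𝒴, the proto conditional mean f_P(y) := (∫ x·q(y|x) dP(x)) / (∫ q(y|x) dP(x)) is Fréchet differentiable on all of 𝒴 with Df_P(y) a symmetric positive semi-definite continuous linear operator for every y ∈ 𝒴, and f_P is a proximity operator of some penalty φ_P : H → ℝ ∪ {+∞}. -/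

import Mathlib

/-!
Given `y`, the posterior has density proportional to `exp (-a x + c ⟪x, y⟫)` with respect to `P`;
`b` cancels in the normalization, and `protoMean q P y` is the mean of the posterior. Moving `y` to
`z` tilts the posterior exponentially by `⟪x, c (z - y)⟫`. Differentiating the mean of a tilted
measure under the integral sign gives the covariance operator, so the derivative of the mean is `c`
times the covariance operator of the posterior, which is symmetric and positive semi-definite.

Jensen's inequality for `exp` makes the mean at `y` a subgradient of the convex function
`ψ y = c⁻¹ log ∫ exp (-a x + c ⟪x, y⟫) dP(x)`. A selection of its subdifferential is a proximity
operator of `ψ* - ‖·‖² / 2`: expanding the squares turns the minimality condition into the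
Fenchel-Young inequality and its equality case.
-/

open MeasureTheory RealInnerProductSpace

/-- The "proto" conditional mean in a real Hilbert space for the proto conditional density `q`
(with `q y x` playing the role of `q(y|x)`) and the prior `P`. -/
noncomputable def protoMean {H : Type*} [NormedAddCommGroup H] [InnerProductSpace ℝ H]
    [CompleteSpace H] [MeasurableSpace H] (q : H → H → ℝ) (P : Measure H) (y : H) : H :=
  (∫ x, q y x ∂P)⁻¹ • ∫ x, q y x • x ∂P

open InnerProductSpace ProbabilityTheory

section ProximityOperator

variable {H : Type*} [NormedAddCommGroup H]

/-- `f` is a proximity operator, on the set `Y`, of the penalty `φ : H → ℝ ∪ {+∞}`. Penalties are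
`EReal`-valued functions that avoid `⊥`; they have to be finite on `f '' Y`, since every `f`
satisfies the minimality condition for `φ = ⊤`. -/
structure IsProximityOperatorOn (Y : Set H) (φ : H → EReal) (f : H → H) : Prop where
  ne_bot : ∀ x, φ x ≠ ⊥
  ne_top : ∀ y ∈ Y, φ (f y) ≠ ⊤
  le : ∀ y ∈ Y, ∀ x, ((2⁻¹ * ‖y - f y‖ ^ 2 : ℝ) : EReal) + φ (f y) ≤
    ((2⁻¹ * ‖y - x‖ ^ 2 : ℝ) : EReal) + φ x

variable [InnerProductSpace ℝ H] {Y : Set H} {ψ : H → ℝ} {f : H → H}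

/-- The function `ψ* - ‖·‖² / 2`, where `ψ*` is the convex conjugate of the restriction of `ψ` to
`Y`. It is the penalty whose proximity operators are the selections of the subdifferential
of `ψ`. -/
noncomputable def conjugatePenalty (Y : Set H) (ψ : H → ℝ) (x : H) : EReal :=
  ⨆ z ∈ Y, ((⟪x, z⟫ - ψ z - 2⁻¹ * ‖x‖ ^ 2 : ℝ) : EReal)

lemma le_conjugatePenalty {z : H} (hz : z ∈ Y) (x : H) :
    ((⟪x, z⟫ - ψ z - 2⁻¹ * ‖x‖ ^ 2 : ℝ) : EReal) ≤ conjugatePenalty Y ψ x :=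
  le_iSup₂ (f := fun z (_ : z ∈ Y) ↦ ((⟪x, z⟫ - ψ z - 2⁻¹ * ‖x‖ ^ 2 : ℝ) : EReal)) z hz

lemma conjugatePenalty_eq_of_subgradient {y v : H} (hy : y ∈ Y)
    (h : ∀ z ∈ Y, ψ y + ⟪v, z - y⟫ ≤ ψ z) :
    conjugatePenalty Y ψ v = ((⟪v, y⟫ - ψ y - 2⁻¹ * ‖v‖ ^ 2 : ℝ) : EReal) := by
  refine le_antisymm (iSup₂_le fun z hz ↦ EReal.coe_le_coe ?_) (le_conjugatePenalty hy v)
  have := h z hz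
  rw [inner_sub_right] at this
  linarith

theorem isProximityOperatorOn_of_subgradient (hY : Y.Nonempty)
    (h : ∀ y ∈ Y, ∀ z ∈ Y, ψ y + ⟪f y, z - y⟫ ≤ ψ z) :
    IsProximityOperatorOn Y (conjugatePenalty Y ψ) f where
  ne_bot x := hY.elim fun _ hz ↦ ne_bot_of_le_ne_bot (EReal.coe_ne_bot _) (le_conjugatePenalty hz x)
  ne_top y hy := conjugatePenalty_eq_of_subgradient hy (h y hy) ▸ EReal.coe_ne_top _
  le y hy x := by
    rw [conjugatePenalty_eq_of_subgradient hy (h y hy)]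
    refine le_trans ?_ (add_le_add le_rfl (le_conjugatePenalty hy x))
    rw [← EReal.coe_add, ← EReal.coe_add, EReal.coe_le_coe_iff, norm_sub_sq_real, norm_sub_sq_real,
      real_inner_comm y x, real_inner_comm y (f y)]
    linarith

lemma exists_isProximityOperatorOn_of_subgradient
    (h : ∀ y ∈ Y, ∀ z ∈ Y, ψ y + ⟪f y, z - y⟫ ≤ ψ z) : ∃ φ, IsProximityOperatorOn Y φ f := by
  rcases Y.eq_empty_or_nonempty with rfl | hY
  · exact ⟨0, fun _ ↦ EReal.zero_ne_bot, by simp, by simp⟩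
  · exact ⟨_, isProximityOperatorOn_of_subgradient hY h⟩

lemma exists_isProximityOperatorOn_const (Y : Set H) (m : H) :
    ∃ φ, IsProximityOperatorOn Y φ fun _ ↦ m :=
  exists_isProximityOperatorOn_of_subgradient (ψ := fun z ↦ ⟪m, z⟫) fun y _ z _ ↦ by
    rw [← inner_add_right, add_sub_cancel]

end ProximityOperator

section Integrability

variable {Ω : Type*} [MeasurableSpace Ω] {μ : Measure Ω}

lemma integrable_of_integrable_mul_of_one_le {k f : Ω → ℝ} (hk : Measurable k) (hk1 : ∀ ω, 1 ≤ k ω)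
    (h : Integrable (fun ω ↦ k ω * f ω) μ) : Integrable f μ := by
  refine (h.bdd_mul (c := 1) hk.inv.aestronglyMeasurable (ae_of_all _ fun ω ↦ ?_)).congr
    (ae_of_all _ fun ω ↦ inv_mul_cancel_left₀ (zero_lt_one.trans_le (hk1 ω)).ne' (f ω))
  rw [Pi.inv_apply, norm_inv, Real.norm_of_nonneg (zero_le_one.trans (hk1 ω))]
  exact inv_le_one_of_one_le₀ (hk1 ω)

lemma integrable_of_integrable_one_add_norm_mul {H : Type*} [NormedAddCommGroup H]
    [MeasurableSpace H] [OpensMeasurableSpace H] {μ : Measure H} {f : H → ℝ}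
    (h : Integrable (fun x ↦ (1 + ‖x‖) * f x) μ) : Integrable f μ :=
  integrable_of_integrable_mul_of_one_le (by fun_prop)
    (fun x ↦ le_add_of_nonneg_right (norm_nonneg x)) h

lemma integrable_pow_mul_exp_of_lt [IsFiniteMeasure μ] {X : Ω → ℝ} (hX : 0 ≤ X) {r s : ℝ}
    (h : Integrable (fun ω ↦ Real.exp (r * X ω)) μ) (hs : 0 ≤ s) (hsr : s < r) (n : ℕ) :
    Integrable (fun ω ↦ X ω ^ n * Real.exp (s * X ω)) μ := by
  have hr : 0 < r := hs.trans_lt hsr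
  have hneg : Integrable (fun ω ↦ Real.exp (-r * X ω)) μ := by
    have hm : AEMeasurable X μ := Real.aemeasurable_of_aemeasurable_exp_mul hr.ne' h.aemeasurable
    refine .of_bound (hm.const_mul (-r)).exp.aestronglyMeasurable 1 (ae_of_all _ fun ω ↦ ?_)
    rw [Real.norm_of_nonneg (Real.exp_pos _).le, Real.exp_le_one_iff]
    exact mul_nonpos_of_nonpos_of_nonneg (neg_nonpos.2 hr.le) (hX ω)
  have := integrable_pow_abs_mul_exp_add_of_integrable_exp_mul (v := 0) (t := r)
    (by simpa only [zero_add] using h) (by simpa only [zero_sub] using hneg) hs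
    (by rwa [abs_of_pos hr]) n
  simpa only [abs_of_nonneg (hX _), zero_mul, zero_add] using this

end Integrability

section Tilted

variable {Ω E : Type*} [MeasurableSpace Ω] [NormedAddCommGroup E] [NormedSpace ℝ E]

lemma integral_tilted_eq_inv_smul (μ : Measure Ω) (f : Ω → ℝ) (g : Ω → E) :
    ∫ ω, g ω ∂μ.tilted f = (∫ ω, Real.exp (f ω) ∂μ)⁻¹ • ∫ ω, Real.exp (f ω) • g ω ∂μ := by
  simp only [integral_tilted, div_eq_inv_mul, mul_smul, integral_smul]

lemma integral_tilted_eq_zero_of_not_aestronglyMeasurable {μ : Measure Ω} {g : Ω → E}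
    (hg : ¬ AEStronglyMeasurable g μ) (f : Ω → ℝ) : ∫ ω, g ω ∂μ.tilted f = 0 := by
  by_cases hf : Integrable (fun ω ↦ Real.exp (f ω)) μ
  · exact integral_non_aestronglyMeasurable fun h ↦ hg (h.mono_ac (absolutelyContinuous_tilted hf))
  · rw [tilted_of_not_integrable hf, integral_zero_measure]

end Tilted

section ExponentialFamily

variable {H : Type*} [NormedAddCommGroup H] [InnerProductSpace ℝ H]

lemma exp_sub_add_eq_mul (s t u : ℝ) :
    Real.exp (s - t + u) = Real.exp (-t) * Real.exp (s + u) := by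
  rw [← Real.exp_add]
  ring_nf

lemma add_mul_inner_add_inner_smul_sub (t c : ℝ) (x y z : H) :
    t + c * ⟪x, y⟫ + ⟪x, c • (z - y)⟫ = t + c * ⟪x, z⟫ := by
  rw [real_inner_smul_right, inner_sub_right]
  ring

lemma aestronglyMeasurable_rankOne {Ω E : Type*} [MeasurableSpace Ω] [NormedAddCommGroup E]
    [NormedSpace ℝ E] {μ : Measure Ω} {g : Ω → E} {T : Ω → H} (hg : AEStronglyMeasurable g μ)
    (hT : AEStronglyMeasurable T μ) : AEStronglyMeasurable (fun ω ↦ rankOne ℝ (g ω) (T ω)) μ :=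
  (ContinuousLinearMap.smulRightL ℝ H E).continuous₂.comp_aestronglyMeasurable
    (((innerSL ℝ).continuous.comp_aestronglyMeasurable hT).prodMk hg)

theorem hasFDerivAt_integral_exp_inner_smul_zero {Ω E : Type*} [MeasurableSpace Ω]
    [NormedAddCommGroup E] [NormedSpace ℝ E] {μ : Measure Ω} {T : Ω → H} {g : Ω → E} {r : ℝ}
    (hr : 0 < r) (hT : AEStronglyMeasurable T μ) (hg : Integrable g μ)
    (h : Integrable (fun ω ↦ ‖g ω‖ * ‖T ω‖ * Real.exp (r * ‖T ω‖)) μ) :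
    HasFDerivAt (fun θ ↦ ∫ ω, Real.exp ⟪T ω, θ⟫ • g ω ∂μ) (∫ ω, rankOne ℝ (g ω) (T ω) ∂μ) 0 := by
  have hweight (θ : H) : AEStronglyMeasurable (fun ω ↦ Real.exp ⟪T ω, θ⟫) μ :=
    Real.continuous_exp.comp_aestronglyMeasurable (hT.inner aestronglyMeasurable_const)
  have hderiv (ω : Ω) (θ : H) : HasFDerivAt (fun θ ↦ Real.exp ⟪T ω, θ⟫ • g ω)
      (Real.exp ⟪T ω, θ⟫ • rankOne ℝ (g ω) (T ω)) θ :=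
    ((innerSL ℝ (T ω)).hasFDerivAt.exp.smul_const (g ω)).congr_fderiv (by ext; simp [mul_smul])
  have hbound (ω : Ω) (θ : H) (hθ : θ ∈ Metric.ball 0 r) :
      ‖Real.exp ⟪T ω, θ⟫ • rankOne ℝ (g ω) (T ω)‖ ≤ ‖g ω‖ * ‖T ω‖ * Real.exp (r * ‖T ω‖) := by
    rw [norm_smul, norm_rankOne, Real.norm_of_nonneg (Real.exp_pos _).le, mul_comm]
    gcongr
    calc ⟪T ω, θ⟫ ≤ ‖T ω‖ * ‖θ‖ := real_inner_le_norm _ _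
      _ ≤ r * ‖T ω‖ := by
        rw [mul_comm]
        gcongr
        exact (mem_ball_zero_iff.1 hθ).le
  have := hasFDerivAt_integral_of_dominated_of_fderiv_le (μ := μ)
    (F := fun θ ω ↦ Real.exp ⟪T ω, θ⟫ • g ω)
    (F' := fun θ ω ↦ Real.exp ⟪T ω, θ⟫ • rankOne ℝ (g ω) (T ω)) (Metric.ball_mem_nhds 0 hr)
    (.of_forall fun θ ↦ (hweight θ).smul hg.aestronglyMeasurable) (by simpa using hg)
    ((hweight 0).smul (aestronglyMeasurable_rankOne hg.aestronglyMeasurable hT))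
    (ae_of_all _ hbound) h (ae_of_all _ fun ω θ _ ↦ hderiv ω θ)
  simpa using this

theorem inner_integral_le_log_integral_exp_inner [CompleteSpace H] {Ω : Type*} [MeasurableSpace Ω]
    {μ : Measure Ω} [IsProbabilityMeasure μ] {T : Ω → H} (hT : Integrable T μ) {θ : H}
    (hexp : Integrable (fun ω ↦ Real.exp ⟪T ω, θ⟫) μ) :
    ⟪∫ ω, T ω ∂μ, θ⟫ ≤ Real.log (∫ ω, Real.exp ⟪T ω, θ⟫ ∂μ) := by
  have hcomm : ⟪∫ ω, T ω ∂μ, θ⟫ = ∫ ω, ⟪T ω, θ⟫ ∂μ := by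
    simp only [real_inner_comm θ, integral_inner hT]
  rw [Real.le_log_iff_exp_le (integral_exp_pos hexp), hcomm]
  exact convexOn_exp.map_integral_le Real.continuous_exp.continuousOn isClosed_univ
    (ae_of_all _ fun _ ↦ Set.mem_univ _) (hT.inner_const θ) hexp

variable [MeasurableSpace H] [BorelSpace H] [CompleteSpace H]

/-- The covariance operator of the measure `μ`, centered at its mean, unlike
`ProbabilityTheory.covarianceOperator`. It represents the bilinear form `covarianceBilin μ`, so it
is `0` by convention if `μ` has no second moment. -/
noncomputable def covarianceOperatorCentered (μ : Measure H) : H →L[ℝ] H :=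
  continuousLinearMapOfBilin (covarianceBilin μ)

lemma isPositive_covarianceOperatorCentered (μ : Measure H) :
    (covarianceOperatorCentered μ).IsPositive := by
  refine (ContinuousLinearMap.isPositive_iff _).2 ⟨fun u v ↦ ?_, fun u ↦ ?_⟩
  · simp only [ContinuousLinearMap.coe_coe, covarianceOperatorCentered]
    rw [continuousLinearMapOfBilin_apply, covarianceBilin_comm, real_inner_comm,
      continuousLinearMapOfBilin_apply]
  · rw [covarianceOperatorCentered, continuousLinearMapOfBilin_apply]
    exact covarianceBilin_self_nonneg u

lemma covarianceOperatorCentered_of_not_memLp {μ : Measure H} (hμ : ¬ MemLp id 2 μ) :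
    covarianceOperatorCentered μ = 0 := by
  ext x
  refine (unique_continuousLinearMapOfBilin _ fun y ↦ ?_).symm
  simp [covarianceBilin_of_not_memLp hμ]

lemma covarianceOperatorCentered_eq {μ : Measure H} [IsProbabilityMeasure μ]
    (hμ : MemLp id 2 μ) : covarianceOperatorCentered μ =
      (∫ x, rankOne ℝ x x ∂μ) - rankOne ℝ (∫ x, x ∂μ) (∫ x, x ∂μ) := by
  have hL1 : Integrable (fun x : H ↦ x) μ := hμ.integrable one_le_two
  have hrank : Integrable (fun x : H ↦ rankOne ℝ x x) μ :=
    (hμ.integrable_norm_pow two_ne_zero).mono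
      (aestronglyMeasurable_rankOne hL1.aestronglyMeasurable hL1.aestronglyMeasurable)
      (by simp [pow_two])
  have hinner (w : H) : MemLp (fun x ↦ ⟪w, x⟫) 2 μ := hμ.const_inner w
  ext u
  refine (unique_continuousLinearMapOfBilin _ fun v ↦ ?_).symm
  rw [covarianceBilin_apply_eq_cov hμ, covariance_eq_sub (hinner u) (hinner v),
    integral_inner hL1, integral_inner hL1, sub_apply, inner_sub_left,
    ContinuousLinearMap.integral_apply hrank, rankOne_apply, real_inner_smul_left,
    real_inner_comm v, real_inner_comm v, real_inner_comm u,
    ← integral_inner (hrank.apply_continuousLinearMap u)]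
  simp only [Pi.mul_apply, rankOne_apply, real_inner_smul_right, real_inner_comm]

lemma hasFDerivAt_integral_tilted_inner_zero_of_aestronglyMeasurable {μ : Measure H}
    [IsProbabilityMeasure μ] {r : ℝ} (hid : AEStronglyMeasurable (fun x ↦ x) μ) (hr : 0 < r)
    (h : Integrable (fun x ↦ Real.exp (r * ‖x‖)) μ) :
    HasFDerivAt (fun θ ↦ ∫ x, x ∂μ.tilted fun x ↦ ⟪x, θ⟫) (covarianceOperatorCentered μ) 0 := by
  have hmoment {s : ℝ} (hs : 0 ≤ s) (hsr : s < r) (n : ℕ) :=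
    integrable_pow_mul_exp_of_lt (fun x : H ↦ norm_nonneg x) h hs hsr n
  have hL2 : MemLp (fun x : H ↦ x) 2 μ :=
    (memLp_two_iff_integrable_sq_norm hid).2 (by simpa using hmoment le_rfl hr 2)
  have hL1 : Integrable (fun x : H ↦ x) μ := hL2.integrable one_le_two
  have hZ := hasFDerivAt_integral_exp_inner_smul_zero (g := fun _ ↦ (1 : ℝ)) (half_pos hr) hid
    (integrable_const 1) (by simpa using hmoment (half_pos hr).le (half_lt_self hr) 1)
  have hN := hasFDerivAt_integral_exp_inner_smul_zero (g := fun x ↦ x) (half_pos hr) hid hL1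
    (by simpa only [pow_two] using hmoment (half_pos hr).le (half_lt_self hr) 2)
  have hmean : ∫ x, innerSL ℝ x ∂μ = innerSL ℝ (∫ x, x ∂μ) :=
    (innerSL ℝ).integral_comp_commSL (by simp) hL1
  have hquot := ((hasDerivAt_inv (by simp)).comp_hasFDerivAt 0 hZ).fun_smul hN
  simp only [Function.comp_apply, inner_zero_right, Real.exp_zero, smul_eq_mul, mul_one,
    integral_const, probReal_univ, inv_one, one_pow, one_smul, neg_smul,
    rankOne_one_left_eq_innerSL] at hquot
  simp only [integral_tilted_eq_inv_smul]
  refine hquot.congr_fderiv ?_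
  rw [covarianceOperatorCentered_eq hL2, hmean, rankOne_def _ (∫ x, x ∂μ)]
  ext
  simp [sub_eq_add_neg]

theorem hasFDerivAt_integral_tilted_inner_zero {μ : Measure H} [IsProbabilityMeasure μ] {r : ℝ}
    (hr : 0 < r) (h : Integrable (fun x ↦ Real.exp (r * ‖x‖)) μ) :
    HasFDerivAt (fun θ ↦ ∫ x, x ∂μ.tilted fun x ↦ ⟪x, θ⟫) (covarianceOperatorCentered μ) 0 := by
  by_cases hid : AEStronglyMeasurable (fun x : H ↦ x) μ
  · exact hasFDerivAt_integral_tilted_inner_zero_of_aestronglyMeasurable hid hr h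
  -- In a non-separable space the identity can fail to be a.e. strongly measurable. The Bochner
  -- integrals and the covariance operator are then `0` by convention.
  · have hμ : ¬ MemLp id 2 μ := fun hμ ↦ hid hμ.aestronglyMeasurable
    simp only [integral_tilted_eq_zero_of_not_aestronglyMeasurable hid,
      covarianceOperatorCentered_of_not_memLp hμ]
    exact hasFDerivAt_const 0 0

end ExponentialFamily

section Posterior

variable {H : Type*} [NormedAddCommGroup H] [InnerProductSpace ℝ H] [MeasurableSpace H]
  {a b : H → ℝ} {c r : ℝ} {q : H → H → ℝ} {P : Measure H} {y z : H}

/-- The posterior distribution given the observation `y`, for the prior `P` and the likelihood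
`q(y|x) = exp (-a x - b y + c ⟪x, y⟫)`. The factor `exp (-b y)` is dropped, because normalization
cancels it. -/
noncomputable def expPosterior (a : H → ℝ) (c : ℝ) (P : Measure H) (y : H) : Measure H :=
  P.tilted fun x ↦ -a x + c * ⟪x, y⟫

/-- The logarithm of the normalizing constant of `expPosterior a c P y`, as a function of `y`. -/
noncomputable def logPartition (a : H → ℝ) (c : ℝ) (P : Measure H) (y : H) : ℝ :=
  Real.log (∫ x, Real.exp (-a x + c * ⟪x, y⟫) ∂P)

lemma expPosterior_tilted (hy : Integrable (fun x ↦ Real.exp (-a x + c * ⟪x, y⟫)) P) :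
    (expPosterior a c P y).tilted (fun x ↦ ⟪x, c • (z - y)⟫) = expPosterior a c P z := by
  simp only [expPosterior, tilted_tilted hy, Pi.add_def, add_mul_inner_add_inner_smul_sub]

lemma protoMean_eq_integral_expPosterior [CompleteSpace H]
    (hq : ∀ y x : H, q y x = Real.exp (-a x - b y + c * ⟪x, y⟫)) :
    protoMean q P = fun y ↦ ∫ x, x ∂expPosterior a c P y := by
  ext1 y
  simp only [protoMean, expPosterior, integral_tilted_eq_inv_smul, hq, exp_sub_add_eq_mul,
    mul_smul, integral_const_mul, integral_smul, mul_inv]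
  rw [smul_comm, inv_smul_smul₀ (Real.exp_ne_zero _)]

section Moments

variable [OpensMeasurableSpace H] {s : ℝ}

lemma integrable_one_add_norm_mul_exp (hs : 0 ≤ s)
    (h : Integrable (fun x ↦ (1 + ‖x‖) * Real.exp (-a x + s * ‖x‖ + c * ⟪x, y⟫)) P) :
    Integrable (fun x ↦ (1 + ‖x‖) * Real.exp (-a x + c * ⟪x, y⟫)) P := by
  refine integrable_of_integrable_mul_of_one_le (k := fun x ↦ Real.exp (s * ‖x‖)) (by fun_prop)
    (fun x ↦ Real.one_le_exp (by positivity)) (h.congr (ae_of_all _ fun x ↦ ?_))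
  dsimp only
  rw [mul_left_comm, ← Real.exp_add]
  ring_nf

lemma integrable_exp_norm_expPosterior
    (hy : Integrable (fun x ↦ Real.exp (-a x + c * ⟪x, y⟫)) P)
    (h : Integrable (fun x ↦ (1 + ‖x‖) * Real.exp (-a x + s * ‖x‖ + c * ⟪x, y⟫)) P) :
    Integrable (fun x ↦ Real.exp (s * ‖x‖)) (expPosterior a c P y) := by
  rw [expPosterior, integrable_tilted_iff hy]
  refine (integrable_of_integrable_one_add_norm_mul h).congr (ae_of_all _ fun x ↦ ?_)
  dsimp only
  rw [smul_eq_mul, ← Real.exp_add]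
  ring_nf

lemma integrable_id_expPosterior (hid : AEStronglyMeasurable (fun x ↦ x) P)
    (h : Integrable (fun x ↦ (1 + ‖x‖) * Real.exp (-a x + c * ⟪x, y⟫)) P) :
    Integrable (fun x ↦ x) (expPosterior a c P y) := by
  have hy := integrable_of_integrable_one_add_norm_mul h
  rw [expPosterior, integrable_tilted_iff hy]
  refine h.mono (hy.aestronglyMeasurable.smul hid) (ae_of_all _ fun x ↦ ?_)
  rw [norm_smul, norm_mul, mul_comm, Real.norm_of_nonneg (by positivity : 0 ≤ 1 + ‖x‖)]
  gcongr
  exact le_add_of_nonneg_left zero_le_one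

end Moments

lemma logPartition_add_inner_le [CompleteSpace H] [NeZero P]
    (hy : Integrable (fun x ↦ Real.exp (-a x + c * ⟪x, y⟫)) P)
    (hz : Integrable (fun x ↦ Real.exp (-a x + c * ⟪x, z⟫)) P)
    (hid : Integrable (fun x ↦ x) (expPosterior a c P y)) :
    logPartition a c P y + c * ⟪∫ x, x ∂expPosterior a c P y, z - y⟫ ≤ logPartition a c P z := by
  have : IsProbabilityMeasure (expPosterior a c P y) := isProbabilityMeasure_tilted hy
  have hexp : Integrable (fun x ↦ Real.exp ⟪x, c • (z - y)⟫) (expPosterior a c P y) := by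
    rw [expPosterior, integrable_tilted_iff hy]
    simpa only [smul_eq_mul, ← Real.exp_add, add_mul_inner_add_inner_smul_sub] using hz
  have hjensen := inner_integral_le_log_integral_exp_inner hid hexp
  rw [expPosterior, integral_exp_tilted] at hjensen
  simp only [Pi.add_apply, add_mul_inner_add_inner_smul_sub] at hjensen
  rw [Real.log_div (integral_exp_pos hz).ne' (integral_exp_pos hy).ne',
    real_inner_smul_right] at hjensen
  rw [logPartition, logPartition, expPosterior]
  linarith

variable [BorelSpace H] [CompleteSpace H] [NeZero P]

theorem hasFDerivAt_integral_expPosterior (hr : 0 < r)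
    (hy : Integrable (fun x ↦ Real.exp (-a x + c * ⟪x, y⟫)) P)
    (h : Integrable (fun x ↦ Real.exp (r * ‖x‖)) (expPosterior a c P y)) :
    HasFDerivAt (fun z ↦ ∫ x, x ∂expPosterior a c P z)
      (c • covarianceOperatorCentered (expPosterior a c P y)) y := by
  have : IsProbabilityMeasure (expPosterior a c P y) := isProbabilityMeasure_tilted hy
  have hparam : HasFDerivAt (fun z : H ↦ c • (z - y)) (c • ContinuousLinearMap.id ℝ H) y :=
    ((hasFDerivAt_id y).sub_const y).const_smul c
  have htilt := hasFDerivAt_integral_tilted_inner_zero hr h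
  rw [← smul_zero c, ← sub_self y] at htilt
  simpa only [Function.comp_def, expPosterior_tilted hy, ContinuousLinearMap.comp_smul,
    ContinuousLinearMap.comp_id] using htilt.comp y hparam

theorem hasFDerivAt_integral_expPosterior_of_integrable (hc : 0 ≤ c) (hr : 0 < r)
    (h : Integrable (fun x ↦ (1 + ‖x‖) * Real.exp (-a x + c * r * ‖x‖ + c * ⟪x, y⟫)) P) :
    HasFDerivAt (fun z ↦ ∫ x, x ∂expPosterior a c P z)
      (c • covarianceOperatorCentered (expPosterior a c P y)) y := by
  rcases hc.eq_or_lt with rfl | hc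
  · simpa only [expPosterior, zero_mul, add_zero, zero_smul] using hasFDerivAt_const _ y
  · have hy := integrable_of_integrable_one_add_norm_mul
      (integrable_one_add_norm_mul_exp (mul_pos hc hr).le h)
    exact hasFDerivAt_integral_expPosterior (mul_pos hc hr) hy
      (integrable_exp_norm_expPosterior hy h)

theorem exists_isProximityOperatorOn_integral_expPosterior {Y : Set H} (hc : 0 ≤ c)
    (h : ∀ y ∈ Y, Integrable (fun x ↦ (1 + ‖x‖) * Real.exp (-a x + c * ⟪x, y⟫)) P) :
    ∃ φ, IsProximityOperatorOn Y φ fun y ↦ ∫ x, x ∂expPosterior a c P y := by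
  rcases hc.eq_or_lt with rfl | hc
  · simpa only [expPosterior, zero_mul, add_zero] using exists_isProximityOperatorOn_const Y _
  by_cases hid : AEStronglyMeasurable (fun x : H ↦ x) P
  · have hexp (y) (hy : y ∈ Y) := integrable_of_integrable_one_add_norm_mul (h y hy)
    refine exists_isProximityOperatorOn_of_subgradient
      (ψ := fun y ↦ c⁻¹ * logPartition a c P y) fun y hy z hz ↦ ?_
    have := logPartition_add_inner_le (hexp y hy) (hexp z hz)
      (integrable_id_expPosterior hid (h y hy))
    rwa [← mul_le_mul_iff_right₀ hc, mul_add, mul_inv_cancel_left₀ hc.ne',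
      mul_inv_cancel_left₀ hc.ne']
  · simpa only [expPosterior, integral_tilted_eq_zero_of_not_aestronglyMeasurable hid] using
      exists_isProximityOperatorOn_const Y 0

end Posterior

theorem stmt13_general {H : Type*} [NormedAddCommGroup H] [InnerProductSpace ℝ H]
    [CompleteSpace H] [MeasurableSpace H] [BorelSpace H] (Y : Set H) {c : ℝ} (hc : 0 ≤ c)
    {a b : H → ℝ} {q : H → H → ℝ}
    (hq : ∀ y x : H, q y x = Real.exp (-a x - b y + c * ⟪x, y⟫)) (P : Measure H) [NeZero P]
    (hP : ∀ y ∈ Y, ∃ r > (0 : ℝ), Integrable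
      (fun x ↦ (1 + ‖x‖) * Real.exp (-a x + c * r * ‖x‖ + c * ⟪x, y⟫)) P) :
    (∀ y ∈ Y, Integrable (fun x ↦ (1 + ‖x‖) * q y x) P ∧ 0 < ∫ x, q y x ∂P) ∧
    (∃ D : H → H →L[ℝ] H, ∀ y ∈ Y,
      HasFDerivAt (protoMean q P) (D y) y ∧
      (∀ u v : H, ⟪u, D y v⟫ = ⟪D y u, v⟫) ∧
      (∀ u : H, 0 ≤ ⟪u, D y u⟫)) ∧
    ∃ φ, IsProximityOperatorOn Y φ (protoMean q P) := by
  have hmoment (y) (hy : y ∈ Y) :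
      Integrable (fun x ↦ (1 + ‖x‖) * Real.exp (-a x + c * ⟪x, y⟫)) P := by
    obtain ⟨r, hr, h⟩ := hP y hy
    exact integrable_one_add_norm_mul_exp (mul_nonneg hc hr.le) h
  have hqint (y) (hy : y ∈ Y) : Integrable (fun x ↦ (1 + ‖x‖) * q y x) P := by
    simpa only [hq, exp_sub_add_eq_mul, mul_left_comm] using
      (hmoment y hy).const_mul (Real.exp (-b y))
  have hpos (y : H) : (c • covarianceOperatorCentered (expPosterior a c P y)).IsPositive :=
    (isPositive_covarianceOperatorCentered _).smul_of_nonneg hc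
  rw [protoMean_eq_integral_expPosterior hq]
  refine ⟨fun y hy ↦ ⟨hqint y hy, ?_⟩, ⟨_, fun y hy ↦ ⟨?_, fun u v ↦
    ((hpos y).isSymmetric u v).symm, (hpos y).inner_nonneg_right⟩⟩,
    exists_isProximityOperatorOn_integral_expPosterior hc hmoment⟩
  · have hqy : Integrable (q y) P := integrable_of_integrable_one_add_norm_mul (hqint y hy)
    rw [funext (hq y)] at hqy ⊢
    exact integral_exp_pos hqy
  · obtain ⟨r, hr, h⟩ := hP y hy
    exact hasFDerivAt_integral_expPosterior_of_integrable hc hr h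

/-- For an exponential-family proto conditional density `q(y|x) = exp(−a(x) − b(y) + c⟨x,y⟩)`
with `c ≥ 0` and `b` C¹ with locally bounded derivative, and any prior `P` satisfying the
moment condition, the proto conditional mean is well defined, differentiable on `𝒴` with a
symmetric positive semi-definite differential, and is a proximity operator of some penalty. -/
theorem stmt13 {H : Type*} [NormedAddCommGroup H] [InnerProductSpace ℝ H]
    [CompleteSpace H] [MeasurableSpace H] [BorelSpace H]
    (X Y : Set H) (hYo : IsOpen Y) (hYc : Convex ℝ Y)
    (c : ℝ) (hc : 0 ≤ c) (a : H → ℝ) (b : H → ℝ) (b' : H → H)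
    (hb : ∀ y ∈ Y, HasGradientAt b (b' y) y) (hb'c : ContinuousOn b' Y)
    (hb'loc : ∀ y ∈ Y, ∃ ε > 0, ∃ M : ℝ, ∀ y' ∈ Y, ‖y' - y‖ < ε → ‖b' y'‖ ≤ M)
    (q : H → H → ℝ) (hq : ∀ y x : H, q y x = Real.exp (-a x - b y + c * ⟪x, y⟫))
    (P : Measure H) [IsProbabilityMeasure P] (hPX : ∀ᵐ x ∂P, x ∈ X)
    (hPint : ∀ y ∈ Y, ∃ r > (0 : ℝ), Integrable
      (fun x => (1 + ‖x‖) ^ 2 * Real.exp (-a x + c * r * ‖x‖ + c * ⟪x, y⟫)) P) :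
    (∀ y ∈ Y, Integrable (fun x => (1 + ‖x‖) * q y x) P ∧ 0 < ∫ x, q y x ∂P) ∧
    (∃ D : H → H →L[ℝ] H, ∀ y ∈ Y,
      HasFDerivAt (protoMean q P) (D y) y ∧
      (∀ u v : H, ⟪u, D y v⟫ = ⟪D y u, v⟫) ∧
      (∀ u : H, 0 ≤ ⟪u, D y u⟫)) ∧
    (∃ φ : H → EReal, ∀ y ∈ Y, ∀ x : H,
      ((2⁻¹ * ‖y - protoMean q P y‖ ^ 2 : ℝ) : EReal) + φ (protoMean q P y) ≤
        ((2⁻¹ * ‖y - x‖ ^ 2 : ℝ) : EReal) + φ x) := by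
  obtain ⟨hint, hderiv, φ, hφ⟩ := stmt13_general Y hc hq P fun y hy ↦ (hPint y hy).imp fun _ hr ↦
    ⟨hr.1, integrable_of_integrable_one_add_norm_mul
      (by simpa only [pow_two, mul_assoc] using hr.2)⟩
  exact ⟨hint, hderiv, φ, hφ.le⟩
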